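/- arXiv:2306.16487 — 3 statements merged into one kernel-verified Lean document; each statement's English description precedes it below -/
import Mathlib

section
/- Let p be a prime and let ξ_p ∈ ℂ be a primitive p-th root of unity. For m ∈ ℤ let [m]_p ∈ {0,1,…,p−1} denote the residue of m modulo p. Then for every n ∈ ℤ, one has Σ_{j=1}^{p−1} ξ_p^{−nj}/(1 − ξ_p^j) = (p−1)/2 − [n]_p. -/
theorem aux_zero (p : ℕ) (hp : p.Prime) (ξ : ℂ) (hξ : IsPrimitiveRoot ξ p) :
    ∑ j ∈ Finset.Ico 1 p, 1 / (1 - ξ ^ j) = ((p : ℂ) - 1) / 2 := by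
  have hrefl : ∑ j ∈ Finset.Ico 1 p, 1 / (1 - ξ ^ (p - j)) =
      ∑ j ∈ Finset.Ico 1 p, 1 / (1 - ξ ^ j) := by
    refine Finset.sum_nbij' (fun j => p - j) (fun j => p - j) ?_ ?_ ?_ ?_ ?_
    · intro j hj; simp only [Finset.mem_Ico] at *; omega
    · intro j hj; simp only [Finset.mem_Ico] at *; omega
    · intro j hj; simp only [Finset.mem_Ico] at *; omega
    · intro j hj; simp only [Finset.mem_Ico] at *; omega
    · intro j hj; rfl
  have hadd : ∑ j ∈ Finset.Ico 1 p, (1 / (1 - ξ ^ j) + 1 / (1 - ξ ^ (p - j))) = (p : ℂ) - 1 := by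
    have : ∀ j ∈ Finset.Ico 1 p, (1 / (1 - ξ ^ j) + 1 / (1 - ξ ^ (p - j))) = (1 : ℂ) := by
      intro j hj
      simp only [Finset.mem_Ico] at hj
      have h1 : 1 - ξ ^ j ≠ 0 :=
        sub_ne_zero.2 (hξ.pow_ne_one_of_pos_of_lt (by omega) hj.2).symm
      have h2 : 1 - ξ ^ (p - j) ≠ 0 :=
        sub_ne_zero.2 (hξ.pow_ne_one_of_pos_of_lt (by omega) (by omega)).symm
      have h3 : ξ ^ j * ξ ^ (p - j) = 1 := by
        rw [← pow_add, Nat.add_sub_cancel' hj.2.le, hξ.pow_eq_one]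
      rw [div_add_div _ _ h1 h2, div_eq_one_iff_eq (mul_ne_zero h1 h2)]
      linear_combination -h3
    rw [Finset.sum_congr rfl this]
    simp [Nat.cast_sub hp.one_le]
  rw [Finset.sum_add_distrib, hrefl] at hadd
  linear_combination hadd / 2

theorem aux_nat (p : ℕ) (hp : p.Prime) (ξ : ℂ) (hξ : IsPrimitiveRoot ξ p) (r : ℕ) (hr : r < p) :
    ∑ j ∈ Finset.Ico 1 p, (ξ⁻¹ ^ r) ^ j / (1 - ξ ^ j) = ((p : ℂ) - 1) / 2 - r := by
  have h0 : ξ ≠ 0 := hξ.ne_zero hp.ne_zero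
  induction r with
  | zero => simpa using aux_zero p hp ξ hξ
  | succ r ih =>
    have hne : ξ⁻¹ ^ (r + 1) ≠ 1 := hξ.inv.pow_ne_one_of_pos_of_lt (by omega) hr
    have hg : ∑ j ∈ Finset.range p, (ξ⁻¹ ^ (r + 1)) ^ j = 0 := by
      rw [geom_sum_eq hne, ← pow_mul, mul_comm, pow_mul, hξ.inv.pow_eq_one]
      simp
    rw [Finset.range_eq_Ico, Finset.sum_eq_sum_Ico_succ_bot hp.pos] at hg
    have hd : ∑ j ∈ Finset.Ico 1 p, ((ξ⁻¹ ^ (r + 1)) ^ j / (1 - ξ ^ j)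
        - (ξ⁻¹ ^ r) ^ j / (1 - ξ ^ j)) = ∑ j ∈ Finset.Ico 1 p, (ξ⁻¹ ^ (r + 1)) ^ j := by
      refine Finset.sum_congr rfl fun j hj => ?_
      simp only [Finset.mem_Ico] at hj
      have h1 : 1 - ξ ^ j ≠ 0 :=
        sub_ne_zero.2 (hξ.pow_ne_one_of_pos_of_lt (by omega) hj.2).symm
      have h3 : ξ⁻¹ ^ j * ξ ^ j = 1 := by
        rw [← mul_pow, inv_mul_cancel₀ h0, one_pow]
      rw [← sub_div, div_eq_iff h1, pow_succ, mul_pow]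
      linear_combination (ξ⁻¹ ^ r) ^ j * h3
    rw [Finset.sum_sub_distrib, ih (by omega)] at hd
    simp only [zero_add, pow_zero] at hg
    push_cast
    linear_combination hd + hg

/-- Let `p` be a prime and `ξ` a primitive `p`-th root of unity in `ℂ`.
For every `n : ℤ`, `∑_{j=1}^{p-1} ξ^{-nj}/(1 - ξ^j) = (p-1)/2 - [n]_p`,
where `[n]_p ∈ {0,…,p-1}` is the residue of `n` mod `p`. -/
theorem stmt_3 (p : ℕ) (hp : p.Prime) (ξ : ℂ) (hξ : IsPrimitiveRoot ξ p) (n : ℤ) :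
    ∑ j ∈ Finset.Ico 1 p, ξ ^ (-(n * (j : ℤ))) / (1 - ξ ^ (j : ℕ))
      = ((p : ℂ) - 1) / 2 - ((n % (p : ℤ) : ℤ) : ℂ) := by
  have h0 : ξ ≠ 0 := hξ.ne_zero hp.ne_zero
  have hpp : (0 : ℤ) < p := by exact_mod_cast hp.pos
  obtain ⟨r, hr⟩ := Int.eq_ofNat_of_zero_le (Int.emod_nonneg n hpp.ne')
  have hlt : r < p := by
    have := Int.emod_lt_of_pos n hpp
    omega
  have hn : ξ ^ n = ξ ^ r := by
    conv_lhs => rw [← Int.mul_ediv_add_emod n p, hr, zpow_add₀ h0, zpow_mul]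
    simp [hξ.pow_eq_one]
  rw [hr, Int.cast_natCast, ← aux_nat p hp ξ hξ r hlt]
  refine Finset.sum_congr rfl fun j _ => ?_
  rw [zpow_neg, zpow_mul, hn, zpow_natCast, inv_pow, inv_pow]
end

section
/- Let d ≥ 1 with gcd(d, 2p) = 1 and let f ∈ AS_d^{0,odd}. Then L(1/√q, χ_f)² = 2 · Σ_{F monic, deg F ≤ d−2} d₂(F) χ_f(F) / q^{(deg F)/2} + (1 − q^{−1/2})² · Σ_{F monic, deg F = d−1} d₂(F) χ_f(F) / q^{(deg F)/2} + q^{−d/2} · Σ_{j=0}^{d−2} ( (d−j)(q^{−1/2} − q^{1/2}) − 2 ) · Σ_{F monic, deg F = j} d₂(F) χ_f(F). -/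
open Polynomial
open scoped Classical ComplexConjugate

noncomputable section

namespace AS

variable {Fq : Type} [Field Fq] [Fintype Fq]

/-- `q^x` as a complex number (real power of the positive real `q`). -/
def qp (q : ℕ) (x : ℝ) : ℂ := ((q : ℝ) ^ x : ℝ)

/-- The monic polynomial of degree `j` whose lower-order coefficients are given by `a`,
i.e. `X^j + ∑_{i<j} a_i X^i`; as `a` ranges over `Fin j → Fq` this enumerates the set `M_j`
of monic polynomials of degree `j`. -/
def mpoly (j : ℕ) (a : Fin j → Fq) : Fq[X] :=
  X ^ j + ∑ i : Fin j, C (a i) * X ^ (i : ℕ)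

/-- The polynomial `∑_{j<m} a_j X^j` with coefficient vector `a`. -/
def cpoly {m : ℕ} (a : Fin m → Fq) : Fq[X] :=
  ∑ j : Fin m, C (a j) * X ^ (j : ℕ)

/-- The `k`-th divisor function: the number of `k`-tuples of monic polynomials whose
product is `F`. -/
def dk (k : ℕ) (F : Fq[X]) : ℕ :=
  Nat.card {t : Fin k → Fq[X] // (∀ i, (t i).Monic) ∧ ∏ i, t i = F}

/-- `ψ_f(F) = ψ(tr_{q/p}(∑_{α : F(α)=0} f(α)))`, the sum being over the roots of `F`
in an algebraic closure, counted with multiplicity; this sum equals the trace from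
`𝔽_q[x]/(F)` to `𝔽_q` of (multiplication by) `f(x̄)`. -/
def psif (p : ℕ) [Algebra (ZMod p) Fq] (ψ : AddChar (ZMod p) ℂ) (f F : Fq[X]) : ℂ :=
  ψ (Algebra.trace (ZMod p) Fq
      (Algebra.trace Fq (AdjoinRoot F) (aeval (AdjoinRoot.root F) f)))

/-- The polynomial Artin–Schreier family `AS_d^0`, encoded by coefficient vectors:
`f = ∑_{j≤d} a_j x^j` with `a_d ≠ 0` and `a_j = 0` whenever `j > 0` and `p ∣ j`. -/
def AS0 (p : ℕ) (d : ℕ) : Finset (Fin (d + 1) → Fq) :=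
  Finset.univ.filter fun a =>
    a (Fin.last d) ≠ 0 ∧ ∀ j : Fin (d + 1), 0 < (j : ℕ) → p ∣ (j : ℕ) → a j = 0

/-- The value at `u` of the Artin–Schreier `L`-function
`L(u,f,ψ) = ∑_{j=0}^{d-1} a_j(f,ψ) u^j` with `a_j(f,ψ) = ∑_{F ∈ M_j} ψ_f(F)`. -/
def Lval (p : ℕ) [Algebra (ZMod p) Fq] (ψ : AddChar (ZMod p) ℂ) (d : ℕ)
    (f : Fq[X]) (u : ℂ) : ℂ :=
  ∑ j ∈ Finset.range d, (∑ a : Fin j → Fq, psif p ψ f (mpoly j a)) * u ^ j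


/-- The character value `χ_f(F)`: equal to `ψ_f(F)` if `F(0) ≠ 0` and to `0` otherwise. -/
def chi0 (p : ℕ) {Fq : Type} [Field Fq] [Fintype Fq] [Algebra (ZMod p) Fq]
    (ψ : AddChar (ZMod p) ℂ) (f F : Fq[X]) : ℂ :=
  if F.coeff 0 ≠ 0 then psif p ψ f F else 0

/-- The value at `u` of `L(u, χ_f) = ∑_{j=0}^{d} (∑_{F ∈ M_j} χ_f(F)) u^j`. -/
def Lchi0 (p : ℕ) {Fq : Type} [Field Fq] [Fintype Fq] [Algebra (ZMod p) Fq]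
    (ψ : AddChar (ZMod p) ℂ) (d : ℕ) (f : Fq[X]) (u : ℂ) : ℂ :=
  ∑ j ∈ Finset.range (d + 1), (∑ a : Fin j → Fq, chi0 p ψ f (mpoly j a)) * u ^ j

/-- The odd polynomial Artin–Schreier family `AS_d^{0,odd} = {f ∈ AS_d^0 : f(−x) = −f(x)}`,
encoded by coefficient vectors. -/
def AS0odd (p : ℕ) (d : ℕ) {Fq : Type} [Field Fq] [Fintype Fq] :
    Finset (Fin (d + 1) → Fq) :=
  (AS0 p d).filter fun a => (cpoly a).comp (-X) = -(cpoly a)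

section TraceSeries
open Matrix

lemma trace_series_aux {K : Type*} [Field K] {n : Type*} [Fintype n] [DecidableEq n]
    (M : Matrix n n K) :
    PowerSeries.derivative K ((charpolyRev M : K[X]) : PowerSeries K) =
      - ((charpolyRev M : K[X]) : PowerSeries K) *
        PowerSeries.mk (fun k => Matrix.trace (M ^ (k + 1))) := by
  let t : (PowerSeries K) := PowerSeries.X
  let Mr : Matrix n n (PowerSeries K) := M.map PowerSeries.C
  let N : Matrix n n (PowerSeries K) := Matrix.of fun i j => PowerSeries.mk fun k => (M ^ (k + 1)) i j
  have hN : (1 - t • Mr) * N = Mr := by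
    rw [sub_mul, one_mul, smul_mul_assoc]
    ext i j k
    have h1 : ∀ m, PowerSeries.coeff m ((Mr * N) i j) = (M ^ (m + 2)) i j := by
      intro m
      rw [Matrix.mul_apply, map_sum, pow_succ' M (m + 1), Matrix.mul_apply]
      simp [Mr, N]
    cases k with
    | zero => simp [N, Mr, t]
    | succ k =>
      simp only [Matrix.sub_apply, Matrix.smul_apply, smul_eq_mul, map_sub, t,
        PowerSeries.coeff_succ_X_mul, h1]
      simp [N, Mr, PowerSeries.coeff_C]
  let φ : K[X] →+* (PowerSeries K)[X] := Polynomial.eval₂RingHom (Polynomial.C.comp PowerSeries.C)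
    (Polynomial.C t + Polynomial.X)
  let ev : K[X] →+* (PowerSeries K) := Polynomial.eval₂RingHom PowerSeries.C t
  have hev : ∀ g : K[X], ev g = (g : PowerSeries K) := by
    intro g
    exact Polynomial.eval₂_C_X_eq_coe
  have hφ : ∀ g : K[X], (derivative (φ g)).eval 0 = ev (derivative g) := by
    intro g
    induction g using Polynomial.induction_on' with
    | add f g hf hg => simp [hf, hg]
    | monomial m c =>
      simp [φ, ev, Polynomial.derivative_pow, Polynomial.derivative_monomial, Polynomial.eval₂_monomial]
      ring
  have hdet : φ (charpolyRev M) =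
      Polynomial.C (ev (charpolyRev M)) * det (1 + (X : (PowerSeries K)[X]) • (-N).map Polynomial.C) := by
    have e1 : ev (charpolyRev M) = det (1 - t • Mr) := by
      rw [charpolyRev, RingHom.map_det]
      congr 1
      ext1 i j
      by_cases hij : i = j <;> simp [ev, Mr, hij] <;> ring
    rw [e1, RingHom.map_det, ← det_mul, charpolyRev, RingHom.map_det]
    congr 1
    have : (Polynomial.C : (PowerSeries K) →+* (PowerSeries K)[X]).mapMatrix (1 - t • Mr) *
        (1 + (X : (PowerSeries K)[X]) • (-N).map Polynomial.C) =
        (Polynomial.C : (PowerSeries K) →+* (PowerSeries K)[X]).mapMatrix (1 - t • Mr) -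
         (X : (PowerSeries K)[X]) • (Polynomial.C : (PowerSeries K) →+* (PowerSeries K)[X]).mapMatrix ((1 - t • Mr) * N) := by
      have e2 : (-N).map (Polynomial.C : PowerSeries K →+* (PowerSeries K)[X]) =
          - (Polynomial.C : PowerSeries K →+* (PowerSeries K)[X]).mapMatrix N := by
        ext1 i j
        simp
      rw [mul_add, mul_one, e2, map_mul, Matrix.mul_smul, Matrix.mul_neg, smul_neg,
        ← sub_eq_add_neg]
    rw [this, hN]
    ext1 i j
    by_cases hij : i = j <;> simp [φ, Mr, Matrix.one_apply, hij] <;> ring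
  have key := hφ (charpolyRev M)
  rw [hdet, derivative_C_mul, eval_C_mul, derivative_det_one_add_X_smul, hev, hev] at key
  rw [PowerSeries.derivative_coe, ← key, trace_neg]
  rw [neg_mul, mul_neg]
  congr 2
  ext k
  simp [N, Matrix.trace]

/-- The coefficients of the logarithmic derivative of the reversed polynomial are traces. -/
lemma trace_series {F : Fq[X]} (hF : F.Monic) :
    PowerSeries.derivative Fq (F.reverse : PowerSeries Fq) =
      - (F.reverse : PowerSeries Fq) *
        PowerSeries.mk (fun k => Algebra.trace Fq (AdjoinRoot F) (AdjoinRoot.root F ^ (k + 1))) := by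
  let pb := AdjoinRoot.powerBasis hF.ne_zero
  have h := trace_series_aux (Algebra.leftMulMatrix pb.basis pb.gen)
  have h2 := charpoly_leftMulMatrix pb
  rw [AdjoinRoot.minpoly_powerBasis_gen_of_monic hF] at h2
  rw [← reverse_charpoly, h2] at h
  rw [h]
  congr 2
  ext k
  rw [Algebra.trace_eq_matrix_trace pb.basis, ← AdjoinRoot.powerBasis_gen hF.ne_zero, map_pow]

end TraceSeries
section CharPart

/-- Logarithmic derivative (with sign). -/
def ld (g : PowerSeries Fq) : PowerSeries Fq := -(PowerSeries.derivative Fq g) * g⁻¹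

/-- The character on power series. -/
def XX (e : AddChar Fq ℂ) {n : ℕ} (c : Fin n → Fq) (g : PowerSeries Fq) : ℂ :=
  if PowerSeries.constantCoeff g ≠ 0 then e (∑ k, c k * PowerSeries.coeff (k : ℕ) (ld g)) else 0

/-- The truncated power series with given coefficients. -/
def ps {m : ℕ} (c : Fin m → Fq) : PowerSeries Fq :=
  PowerSeries.mk fun i => if h : i < m then c ⟨i, h⟩ else 0

lemma coeff_ps {m : ℕ} (c : Fin m → Fq) (i : Fin m) : PowerSeries.coeff (i : ℕ) (ps c) = c i := by
  simp [ps]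

lemma coeff_ps_ge {m : ℕ} (c : Fin m → Fq) (i : ℕ) (h : m ≤ i) :
    PowerSeries.coeff i (ps c) = 0 := by
  simp [ps, not_lt.mpr h]

lemma ld_mul (g h : PowerSeries Fq) (hg : PowerSeries.constantCoeff g ≠ 0)
    (hh : PowerSeries.constantCoeff h ≠ 0) : ld (g * h) = ld g + ld h := by
  have h1 := PowerSeries.mul_inv_cancel g hg
  have h2 := PowerSeries.mul_inv_cancel h hh
  unfold ld
  rw [PowerSeries.mul_inv_rev, Derivation.leibniz, smul_eq_mul, smul_eq_mul]
  linear_combination (-(PowerSeries.derivative Fq h) * h⁻¹) * h1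
    - (PowerSeries.derivative Fq g) * g⁻¹ * h2

lemma XX_mul (e : AddChar Fq ℂ) {n : ℕ} (c : Fin n → Fq) (g h : PowerSeries Fq) :
    XX e c (g * h) = XX e c g * XX e c h := by
  unfold XX
  by_cases hg : PowerSeries.constantCoeff g = 0
  · simp [hg]
  by_cases hh : PowerSeries.constantCoeff h = 0
  · simp [hh]
  rw [if_pos (by simp [hg, hh]), if_pos hg, if_pos hh, ld_mul g h hg hh, ← AddChar.map_add_eq_mul]
  simp [mul_add, Finset.sum_add_distrib]

lemma XX_C (e : AddChar Fq ℂ) {n : ℕ} (c : Fin n → Fq) (x : Fq) (hx : x ≠ 0) :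
    XX e c (PowerSeries.C x) = 1 := by
  simp [XX, hx, ld]

lemma XX_one (e : AddChar Fq ℂ) {n : ℕ} (c : Fin n → Fq) :
    XX e c 1 = 1 := by
  simpa using XX_C e c 1 one_ne_zero

lemma sub_dvd (N : ℕ) (g h : PowerSeries Fq)
    (H : ∀ i < N, PowerSeries.coeff i g = PowerSeries.coeff i h) :
    (PowerSeries.X : PowerSeries Fq) ^ N ∣ g - h := by
  rw [PowerSeries.X_pow_dvd_iff]
  intro i hi
  rw [map_sub, H i hi, sub_self]

lemma coeff_mul_congr (N : ℕ) (u g h : PowerSeries Fq)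
    (H : ∀ i < N, PowerSeries.coeff i g = PowerSeries.coeff i h) :
    ∀ i < N, PowerSeries.coeff i (u * g) = PowerSeries.coeff i (u * h) := by
  intro i hi
  have h1 := Dvd.dvd.mul_left (sub_dvd N g h H) u
  rw [PowerSeries.X_pow_dvd_iff] at h1
  have := h1 i hi
  rw [mul_sub, map_sub, sub_eq_zero] at this
  exact this

lemma XX_congr (e : AddChar Fq ℂ) {n : ℕ} (c : Fin n → Fq) (g h : PowerSeries Fq)
    (H : ∀ i < n + 1, PowerSeries.coeff i g = PowerSeries.coeff i h) : XX e c g = XX e c h := by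
  have h0 : PowerSeries.constantCoeff g = PowerSeries.constantCoeff h := by
    simpa using H 0 (by omega)
  unfold XX
  rw [h0]
  split_ifs with hh
  · have hg : PowerSeries.constantCoeff g ≠ 0 := by rwa [h0]
    have h1 := PowerSeries.mul_inv_cancel g hg
    have h2 := PowerSeries.mul_inv_cancel h hh
    congr 1
    apply Finset.sum_congr rfl
    intro k _
    congr 1
    obtain ⟨r, hr⟩ := sub_dvd _ g h H
    have hgr : g = h + PowerSeries.X ^ (n + 1) * r := by rw [← hr]; ring
    have hd : PowerSeries.derivative Fq g = PowerSeries.derivative Fq h +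
        PowerSeries.X ^ n * (PowerSeries.X * PowerSeries.derivative Fq r + ((n + 1 : ℕ) : PowerSeries Fq) * r) := by
      rw [hgr, map_add, Derivation.leibniz, PowerSeries.derivative_pow, smul_eq_mul, smul_eq_mul,
        PowerSeries.derivative_X]
      simp
      ring
    have : (PowerSeries.X : PowerSeries Fq) ^ n ∣ ld g - ld h := by
      refine ⟨-(PowerSeries.X * PowerSeries.derivative Fq r + ((n + 1 : ℕ) : PowerSeries Fq) * r) * g⁻¹ +
        PowerSeries.derivative Fq h * PowerSeries.X * r * g⁻¹ * h⁻¹, ?_⟩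
      unfold ld
      have e1 : h⁻¹ - g⁻¹ = PowerSeries.X ^ (n + 1) * r * g⁻¹ * h⁻¹ := by
        rw [← hr]
        linear_combination (-h⁻¹) * h1 + g⁻¹ * h2
      rw [hd]
      linear_combination (PowerSeries.derivative Fq h) * e1
    rw [PowerSeries.X_pow_dvd_iff] at this
    have := this k k.2
    rwa [map_sub, sub_eq_zero] at this
  · rfl

lemma XX_primitive (e : AddChar Fq ℂ) (he : e ≠ 1) {n : ℕ} (c : Fin (n + 1) → Fq)
    (hc : c (Fin.last n) ≠ 0) (hn : ((n + 1 : ℕ) : Fq) ≠ 0) :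
    ∃ b : Fq, XX e c (1 + PowerSeries.C b * PowerSeries.X ^ (n + 1)) ≠ 1 := by
  obtain ⟨x, hx⟩ := (AddChar.ne_one_iff).1 he
  refine ⟨-(x / (c (Fin.last n) * ((n + 1 : ℕ) : Fq))), ?_⟩
  set b := -(x / (c (Fin.last n) * ((n + 1 : ℕ) : Fq))) with hb
  set g := 1 + PowerSeries.C b * (PowerSeries.X : PowerSeries Fq) ^ (n + 1) with hg
  have hcc : PowerSeries.constantCoeff g = 1 := by simp [hg]
  have hl : ld g = PowerSeries.X ^ n * (PowerSeries.C (-(b * ((n + 1 : ℕ) : Fq))) * g⁻¹) := by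
    unfold ld
    have : PowerSeries.derivative Fq g =
       PowerSeries.X ^ n * PowerSeries.C (b * ((n + 1 : ℕ) : Fq)) := by
      rw [hg, map_add, Derivation.leibniz, PowerSeries.derivative_pow, smul_eq_mul, smul_eq_mul,
        PowerSeries.derivative_X]
      simp
      ring
    rw [this]
    simp only [map_neg]
    ring
  have hs : ∑ k, c k * PowerSeries.coeff (k : ℕ) (ld g) = x := by
    rw [Fin.sum_univ_castSucc, Finset.sum_eq_zero, zero_add, hl, PowerSeries.coeff_X_pow_mul']
    · simp only [Fin.val_last, le_refl, if_true, Nat.sub_self, hb, neg_mul, neg_neg,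
        PowerSeries.coeff_zero_eq_constantCoeff, map_mul, PowerSeries.constantCoeff_C,
        PowerSeries.constantCoeff_inv, hcc, inv_one, mul_one]
      field_simp
    · intro i _
      rw [hl, PowerSeries.coeff_X_pow_mul']
      have := i.2
      simp
  unfold XX
  rw [if_pos (by rw [hcc]; exact one_ne_zero), hs]
  exact hx

/-- Multiplication by a power series, truncated. -/
def act {N : ℕ} (u : PowerSeries Fq) (h : Fin N → Fq) : Fin N → Fq :=
  fun i => PowerSeries.coeff (i : ℕ) (u * ps h)

lemma coeff_act {N : ℕ} (u : PowerSeries Fq) (h : Fin N → Fq) :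
    ∀ i < N, PowerSeries.coeff i (ps (act u h)) = PowerSeries.coeff i (u * ps h) := by
  intro i hi
  rw [show i = ((⟨i, hi⟩ : Fin N) : ℕ) from rfl, coeff_ps]
  rfl

lemma act_bij {N : ℕ} (u : PowerSeries Fq) (hu : PowerSeries.constantCoeff u ≠ 0) :
    Function.Bijective (act u : (Fin N → Fq) → (Fin N → Fq)) := by
  apply Finite.injective_iff_bijective.1
  intro h h' heq
  have h1 : ∀ i < N, PowerSeries.coeff i (u * ps h) = PowerSeries.coeff i (u * ps h') := by
    intro i hi
    rw [← coeff_act u h i hi, heq, coeff_act u h' i hi]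
  have h2 := coeff_mul_congr N u⁻¹ _ _ h1
  simp only [← mul_assoc, PowerSeries.inv_mul_cancel u hu, one_mul] at h2
  funext i
  rw [← coeff_ps h i, ← coeff_ps h' i]
  exact h2 i i.2

/-- Gauss sum with shift. -/
def GS (e : AddChar Fq ℂ) {n : ℕ} (c : Fin n → Fq) (N : ℕ) (k : PowerSeries Fq) : ℂ :=
  ∑ h : Fin N → Fq, XX e c (ps h) * e (PowerSeries.coeff (N - 1) (ps h * k))

/-- Sums of the character over truncated power series. -/
def US (e : AddChar Fq ℂ) {n : ℕ} (c : Fin n → Fq) (m : ℕ) : ℂ :=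
  ∑ h : Fin m → Fq, XX e c (ps h)

lemma XX_act (e : AddChar Fq ℂ) {n : ℕ} (c : Fin n → Fq) (u : PowerSeries Fq)
    (h : Fin (n + 1) → Fq) : XX e c (ps (act u h)) = XX e c u * XX e c (ps h) := by
  rw [← XX_mul]
  exact XX_congr _ _ _ _ (coeff_act u h)

lemma GS_unit (e : AddChar Fq ℂ) {n : ℕ} (c : Fin n → Fq) (k : PowerSeries Fq)
    (hk : PowerSeries.constantCoeff k ≠ 0) :
    XX e c k * GS e c (n + 1) k = GS e c (n + 1) 1 := by
  unfold GS
  rw [Finset.mul_sum, ← (act_bij k hk).sum_comp (fun h => XX e c (ps h) * e _)]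
  apply Finset.sum_congr rfl
  intro h _
  rw [XX_act, mul_one, coeff_act _ _ _ (by omega), mul_comm k, mul_assoc]

lemma US_top (e : AddChar Fq ℂ) (he : e ≠ 1) {n : ℕ} (c : Fin (n + 1) → Fq)
    (hc : c (Fin.last n) ≠ 0) (hn : ((n + 1 : ℕ) : Fq) ≠ 0) : US e c (n + 2) = 0 := by
  obtain ⟨b, hb⟩ := XX_primitive e he c hc hn
  set u := 1 + PowerSeries.C b * (PowerSeries.X : PowerSeries Fq) ^ (n + 1) with hu
  have hcc : PowerSeries.constantCoeff u ≠ 0 := by simp [hu]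
  have : US e c (n + 2) = XX e c u * US e c (n + 2) := by
    unfold US
    rw [Finset.mul_sum, ← (act_bij u hcc).sum_comp]
    exact Finset.sum_congr rfl fun h _ => XX_act e c u h
  by_contra h0
  exact hb (mul_right_cancel₀ h0 (by rw [← this, one_mul]))

lemma GS_nonunit (e : AddChar Fq ℂ) (he : e ≠ 1) {n : ℕ} (c : Fin (n + 1) → Fq)
    (hc : c (Fin.last n) ≠ 0) (hn : ((n + 1 : ℕ) : Fq) ≠ 0) (k : PowerSeries Fq)
    (hk : PowerSeries.constantCoeff k = 0) : GS e c (n + 2) k = 0 := by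
  obtain ⟨b, hb⟩ := XX_primitive e he c hc hn
  set u := 1 + PowerSeries.C b * (PowerSeries.X : PowerSeries Fq) ^ (n + 1) with hu
  have hcc : PowerSeries.constantCoeff u ≠ 0 := by simp [hu]
  have : GS e c (n + 2) k = XX e c u * GS e c (n + 2) k := by
    unfold GS
    rw [Finset.mul_sum, ← (act_bij u hcc).sum_comp]
    refine Finset.sum_congr rfl fun h _ => ?_
    rw [XX_act, mul_assoc]
    congr 3
    rw [mul_comm, coeff_mul_congr (n + 2) k _ _ (coeff_act u h) _ (by omega)]
    rw [hu, show k * ((1 + PowerSeries.C b * (PowerSeries.X : PowerSeries Fq) ^ (n + 1)) * ps h)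
      = ps h * k + PowerSeries.X ^ (n + 1) * (PowerSeries.C b * k * ps h) by ring]
    rw [map_add, show n + 2 - 1 = n + 1 from rfl]
    simp [PowerSeries.coeff_X_pow_mul', hk]
  by_contra h0
  exact hb (mul_right_cancel₀ h0 (by rw [← this, one_mul]))

lemma GS_eq (e : AddChar Fq ℂ) (he : e ≠ 1) {n : ℕ} (c : Fin (n + 1) → Fq)
    (hc : c (Fin.last n) ≠ 0) (hn : ((n + 1 : ℕ) : Fq) ≠ 0) (k : PowerSeries Fq) :
    GS e c (n + 2) k = conj (XX e c k) * GS e c (n + 2) 1 := by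
  by_cases hk : PowerSeries.constantCoeff k = 0
  · rw [GS_nonunit e he c hc hn k hk]
    simp [XX, hk]
  · rw [← GS_unit e c k hk, ← mul_assoc]
    have : conj (XX e c k) * XX e c k = 1 := by
      unfold XX
      rw [if_pos hk, ← AddChar.map_neg_eq_conj, ← AddChar.map_add_eq_mul]
      simp
    rw [this, one_mul]

lemma ps_append {m m' : ℕ} (h1 : Fin m → Fq) (i : Fin m') (h2 : Fin m' → Fq) :
    PowerSeries.coeff (m + (i : ℕ)) (ps (Fin.append h1 h2)) = h2 i := by
  have := coeff_ps (Fin.append h1 h2) (Fin.natAdd m i)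
  rw [Fin.append_right] at this
  simpa using this

lemma ps_append_zero {m m' : ℕ} (h1 : Fin m → Fq) :
    ps (Fin.append h1 (0 : Fin m' → Fq)) = ps h1 := by
  ext i
  by_cases hi : i < m
  · have := coeff_ps (Fin.append h1 (0 : Fin m' → Fq)) (Fin.castAdd m' ⟨i, hi⟩)
    rw [Fin.append_left] at this
    simpa [ps, hi] using this
  · rw [coeff_ps_ge h1 i (by omega)]
    by_cases hi2 : i < m + m'
    · have := ps_append h1 (⟨i - m, by omega⟩ : Fin m') 0
      simpa [Nat.add_sub_cancel' (not_lt.1 hi)] using this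
    · exact coeff_ps_ge _ _ (by omega)

lemma ps_add {m : ℕ} (h k : Fin m → Fq) : ps (h + k) = ps h + ps k := by
  ext i
  by_cases hi : i < m <;> simp [ps, hi]

lemma ps_single {m : ℕ} (i : Fin m) (x : Fq) :
    ps (Pi.single i x) = PowerSeries.C x * PowerSeries.X ^ (i : ℕ) := by
  ext j
  rw [PowerSeries.coeff_C_mul, PowerSeries.coeff_X_pow]
  by_cases hj : j < m
  · simp [ps, hj, Pi.single_apply, Fin.ext_iff]
  · have : j ≠ i := by have := i.2; omega
    simp [ps, hj, this]

lemma inner_sum (e : AddChar Fq ℂ) (he : e ≠ 1) {m m' : ℕ} 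
    (h1 : Fin m → Fq) (h2 : Fin m' → Fq) :
    ∑ k : Fin m' → Fq, e (PowerSeries.coeff (m + m' - 1) (ps (Fin.append h1 h2) * ps k)) =
      if h2 = 0 then (Fintype.card Fq : ℂ) ^ m' else 0 := by
  let T : (Fin m' → Fq) →+ Fq :=
    AddMonoidHom.mk' (fun k => PowerSeries.coeff (m + m' - 1) (ps (Fin.append h1 h2) * ps k))
      (by intro a b; rw [ps_add, mul_add, map_add])
  have hT := AddChar.sum_eq_ite (e.compAddMonoidHom T)
  have : ∀ k, (e.compAddMonoidHom T) k =
    e (PowerSeries.coeff (m + m' - 1) (ps (Fin.append h1 h2) * ps k)) := fun k => rfl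
  simp only [this] at hT
  rw [hT]
  by_cases h0 : h2 = 0
  · rw [if_pos h0, if_pos]
    · simp
    · rw [AddChar.eq_zero_iff]
      intro k
      rw [this, h0, ps_append_zero, PowerSeries.coeff_mul, Finset.sum_eq_zero, AddChar.map_zero_eq_one]
      rintro ⟨i, j⟩ hij
      rw [Finset.HasAntidiagonal.mem_antidiagonal] at hij
      simp only at hij ⊢
      by_cases hi : m ≤ i
      · rw [coeff_ps_ge _ _ hi, zero_mul]
      · by_cases hj : m' ≤ j
        · rw [coeff_ps_ge _ _ hj, mul_zero]
        · omega
  · rw [if_neg h0, if_neg]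
    intro hz
    rw [AddChar.eq_zero_iff] at hz
    obtain ⟨i, hi⟩ := Function.ne_iff.1 h0
    obtain ⟨x, hx⟩ := (AddChar.ne_one_iff).1 he
    apply hx
    have := hz (Pi.single (Fin.rev i) (x / h2 i))
    rw [← this]
    change e x = e (PowerSeries.coeff _ (_ * ps _))
    rw [ps_single, show ∀ (a b c : PowerSeries Fq), a * (b * c) = b * (c * a) by intros; ring,
      PowerSeries.coeff_C_mul, PowerSeries.coeff_X_pow_mul', if_pos (by simp [Fin.val_rev]; omega)]
    have hidx : m + m' - 1 - (Fin.rev i : ℕ) = m + i := by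
      have := i.2
      rw [Fin.val_rev]; omega
    rw [hidx, ps_append, div_mul_cancel₀ _ hi]

lemma FE_aux (e : AddChar Fq ℂ) (he : e ≠ 1) {n : ℕ} (c : Fin n → Fq) (m m' : ℕ) :
    ∑ k : Fin m' → Fq, GS e c (m + m') (ps k) =
      (Fintype.card Fq : ℂ) ^ m' * US e c m := by
  unfold GS US
  rw [Finset.sum_comm]
  simp_rw [← Finset.mul_sum]
  rw [← (Fin.appendEquiv m m').sum_comp, Fintype.sum_prod_type, Finset.mul_sum]
  refine Finset.sum_congr rfl fun h1 _ => ?_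
  have : ∀ h2 : Fin m' → Fq, (Fin.appendEquiv m m') (h1, h2) = Fin.append h1 h2 := fun h2 => rfl
  simp_rw [this, inner_sum e he]
  simp [ps_append_zero, mul_comm]

lemma FE (e : AddChar Fq ℂ) (he : e ≠ 1) {n : ℕ} (c : Fin (n + 1) → Fq)
    (hc : c (Fin.last n) ≠ 0) (hn : ((n + 1 : ℕ) : Fq) ≠ 0) (m m' : ℕ) (hm : m + m' = n + 2) :
    conj (US e c m') * GS e c (n + 2) 1 = (Fintype.card Fq : ℂ) ^ m' * US e c m := by
  rw [← FE_aux e he c m m', hm]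
  simp_rw [GS_eq e he c hc hn (ps _)]
  rw [← Finset.sum_mul, US, map_sum]

lemma ld_rescale (g : PowerSeries Fq) (hg : PowerSeries.constantCoeff g ≠ 0) :
    ld (PowerSeries.rescale (-1) g) = - PowerSeries.rescale (-1) (ld g) := by
  have h1 := PowerSeries.mul_inv_cancel g hg
  have hd : PowerSeries.derivative Fq (PowerSeries.rescale (-1) g) =
      - PowerSeries.rescale (-1) (PowerSeries.derivative Fq g) := by
    ext k
    simp [PowerSeries.coeff_derivative, PowerSeries.coeff_rescale, pow_succ]
    ring
  have hi : (PowerSeries.rescale (-1) g)⁻¹ = PowerSeries.rescale (-1) (g⁻¹) := by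
    rw [PowerSeries.inv_eq_iff_mul_eq_one, ← map_mul, mul_comm, h1, map_one]
    rw [← PowerSeries.coeff_zero_eq_constantCoeff_apply, PowerSeries.coeff_rescale]
    simpa using hg
  unfold ld
  rw [hd, hi, map_mul, map_neg]
  ring

lemma US_real (e : AddChar Fq ℂ) {n : ℕ} (c : Fin n → Fq)
    (hodd : ∀ k : Fin n, Odd (k : ℕ) → c k = 0) (m : ℕ) : conj (US e c m) = US e c m := by
  unfold US
  rw [map_sum]
  have hinv : Function.Involutive (fun (h : Fin m → Fq) (i : Fin m) => (-1) ^ (i : ℕ) * h i) := by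
    intro h
    funext i
    simp only
    rw [← mul_assoc, ← mul_pow]
    simp
  rw [← hinv.bijective.sum_comp]
  refine Finset.sum_congr rfl fun h _ => ?_
  have hps : ps (fun i : Fin m => (-1) ^ (i : ℕ) * h i) = PowerSeries.rescale (-1) (ps h) := by
    ext i
    rw [PowerSeries.coeff_rescale]
    by_cases hi : i < m <;> simp [ps, hi]
  rw [hps]
  have hc0 : PowerSeries.constantCoeff (PowerSeries.rescale (-1) (ps h)) =
      PowerSeries.constantCoeff (ps h) := by
    rw [← PowerSeries.coeff_zero_eq_constantCoeff_apply, PowerSeries.coeff_rescale]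
    simp
  unfold XX
  rw [hc0]
  split_ifs with hh
  · rw [← AddChar.map_neg_eq_conj, ld_rescale _ hh, ← Finset.sum_neg_distrib]
    congr 1
    refine Finset.sum_congr rfl fun k _ => ?_
    rcases Nat.even_or_odd (k : ℕ) with hk | hk
    · simp [PowerSeries.coeff_rescale, hk.neg_one_pow]
    · simp [hodd k hk]
  · simp

end CharPart
section MonicPart

lemma mpoly_coeff (j : ℕ) (b : Fin j → Fq) (i : ℕ) :
    (mpoly j b).coeff i = if h : i < j then b ⟨i, h⟩ else if i = j then 1 else 0 := by
  unfold mpoly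
  rw [coeff_add, coeff_X_pow, finsetSum_coeff]
  simp only [coeff_C_mul_X_pow]
  by_cases h : i < j
  · rw [if_neg h.ne, dif_pos h, zero_add, Finset.sum_eq_single ⟨i, h⟩]
    · simp
    · intro x _ hx
      rw [if_neg]
      rintro rfl
      exact hx rfl
    · simp
  · rw [dif_neg h, Finset.sum_eq_zero, add_zero]
    intro x _
    rw [if_neg]
    rintro rfl
    exact h x.2

lemma mpoly_natDegree (j : ℕ) (b : Fin j → Fq) : (mpoly j b).natDegree = j := by
  apply natDegree_eq_of_le_of_coeff_ne_zero
  · rw [natDegree_le_iff_coeff_eq_zero]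
    intro i hi
    rw [mpoly_coeff, dif_neg (by omega), if_neg (by omega)]
  · rw [mpoly_coeff]; simp

lemma mpoly_monic (j : ℕ) (b : Fin j → Fq) : (mpoly j b).Monic := by
  rw [Monic, leadingCoeff, mpoly_natDegree, mpoly_coeff]; simp

lemma mpoly_injective (j : ℕ) : Function.Injective (mpoly j : (Fin j → Fq) → Fq[X]) := by
  intro b b' h
  funext i
  have := congrArg (fun F => F.coeff (i : ℕ)) h
  simpa [mpoly_coeff] using this

/-- The finite set of monic polynomials of degree `j`. -/
def MM (Fq : Type) [Field Fq] [Fintype Fq] (j : ℕ) : Finset Fq[X] :=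
  Finset.univ.image (mpoly j)

lemma mem_MM (j : ℕ) (F : Fq[X]) : F ∈ MM Fq j ↔ F.Monic ∧ F.natDegree = j := by
  unfold MM
  rw [Finset.mem_image]
  constructor
  · rintro ⟨b, _, rfl⟩
    exact ⟨mpoly_monic j b, mpoly_natDegree j b⟩
  · rintro ⟨hm, rfl⟩
    refine ⟨fun i => F.coeff i, Finset.mem_univ _, ?_⟩
    ext i
    rw [mpoly_coeff]
    split_ifs with h1 h2
    · rfl
    · rw [h2]; exact hm.symm
    · exact (coeff_eq_zero_of_natDegree_lt (by omega)).symm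

lemma sum_MM (j : ℕ) (g : Fq[X] → ℂ) : ∑ b : Fin j → Fq, g (mpoly j b) = ∑ F ∈ MM Fq j, g F := by
  unfold MM
  rw [Finset.sum_image]
  exact fun a _ b _ h => mpoly_injective j h

lemma conv_sum (g : Fq[X] → ℂ) (hg : ∀ F G, F.Monic → G.Monic → g (F * G) = g F * g G) (n : ℕ) :
    ∑ b : Fin n → Fq, (dk 2 (mpoly n b) : ℂ) * g (mpoly n b) =
      ∑ x ∈ Finset.HasAntidiagonal.antidiagonal n,
        (∑ b : Fin x.1 → Fq, g (mpoly x.1 b)) * (∑ b : Fin x.2 → Fq, g (mpoly x.2 b)) := by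
  rw [sum_MM n (fun F => (dk 2 F : ℂ) * g F)]
  simp_rw [sum_MM _ g]
  let P : Finset (Fq[X] × Fq[X]) :=
    (Finset.HasAntidiagonal.antidiagonal n).biUnion fun x => MM Fq x.1 ×ˢ MM Fq x.2
  have hP : ∀ y : Fq[X] × Fq[X], y ∈ P ↔
      y.1.Monic ∧ y.2.Monic ∧ y.1.natDegree + y.2.natDegree = n := by
    intro y
    simp only [P, Finset.mem_biUnion, Finset.mem_product, mem_MM,
      Finset.HasAntidiagonal.mem_antidiagonal]
    constructor
    · rintro ⟨x, hx, ⟨h1, h2⟩, h3, h4⟩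
      exact ⟨h1, h3, by rw [h2, h4, hx]⟩
    · rintro ⟨h1, h2, h3⟩
      exact ⟨(y.1.natDegree, y.2.natDegree), h3, ⟨h1, rfl⟩, h2, rfl⟩
  have hR : ∑ x ∈ Finset.HasAntidiagonal.antidiagonal n,
      (∑ F ∈ MM Fq x.1, g F) * (∑ F ∈ MM Fq x.2, g F) = ∑ y ∈ P, g (y.1 * y.2) := by
    rw [Finset.sum_biUnion]
    · refine Finset.sum_congr rfl fun x _ => ?_
      rw [Finset.sum_mul_sum, Finset.sum_product]
      refine Finset.sum_congr rfl fun F hF => Finset.sum_congr rfl fun G hG => ?_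
      rw [hg F G ((mem_MM _ _).1 hF).1 ((mem_MM _ _).1 hG).1]
    · intro x _ x' _ hne
      rw [Function.onFun, Finset.disjoint_left]
      intro y hy hy'
      rw [Finset.mem_product, mem_MM, mem_MM] at hy hy'
      exact hne (Prod.ext (hy.1.2.symm.trans hy'.1.2) (hy.2.2.symm.trans hy'.2.2))
  rw [hR, ← Finset.sum_fiberwise_of_maps_to (s := P) (t := MM Fq n) (g := fun y => y.1 * y.2)]
  · refine Finset.sum_congr rfl fun F hF => ?_
    have h1 : ∑ y ∈ P with y.1 * y.2 = F, g (y.1 * y.2) = ∑ y ∈ P with y.1 * y.2 = F, g F := by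
      refine Finset.sum_congr rfl fun y hy => ?_
      rw [(Finset.mem_filter.1 hy).2]
    rw [h1, Finset.sum_const, nsmul_eq_mul]
    congr 2
    unfold dk
    rw [← Nat.card_eq_finsetCard]
    refine Nat.card_congr ((finTwoArrowEquiv Fq[X]).subtypeEquiv fun t => ?_)
    rw [Finset.mem_filter, hP]
    simp only [finTwoArrowEquiv_apply, Fin.forall_fin_two, Fin.prod_univ_two]
    constructor
    · rintro ⟨⟨h1, h2⟩, h3⟩
      refine ⟨⟨h1, h2, ?_⟩, h3⟩
      change (t 0).natDegree + (t 1).natDegree = n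
      rw [← h1.natDegree_mul h2, h3, ((mem_MM _ _).1 hF).2]
    · rintro ⟨⟨h1, h2, _⟩, h3⟩
      exact ⟨⟨h1, h2⟩, h3⟩
  · intro y hy
    obtain ⟨h1, h2, h3⟩ := (hP y).1 hy
    exact (mem_MM _ _).2 ⟨h1.mul h2, by rw [h1.natDegree_mul h2, h3]⟩

lemma sum_psif_split (g : Fq[X] → ℂ) (hg : ∀ F : Fq[X], F.Monic → g (X * F) = g F) (j : ℕ) :
    ∑ b : Fin (j + 1) → Fq, (if (mpoly (j + 1) b).coeff 0 ≠ 0 then g (mpoly (j + 1) b) else 0) =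
      ∑ b : Fin (j + 1) → Fq, g (mpoly (j + 1) b) - ∑ b : Fin j → Fq, g (mpoly j b) := by
  have h1 : ∑ b : Fin j → Fq, g (mpoly j b) = ∑ b : Fin (j + 1) → Fq,
      (if (mpoly (j + 1) b).coeff 0 = 0 then g (mpoly (j + 1) b) else 0) := by
    rw [← (Fin.consEquiv (fun _ : Fin (j + 1) => Fq)).sum_comp, Fintype.sum_prod_type,
      Finset.sum_eq_single (0 : Fq)]
    · refine Finset.sum_congr rfl fun b _ => ?_
      have h2 : mpoly (j + 1) (Fin.cons (0 : Fq) b : Fin (j + 1) → Fq) = X * mpoly j b := by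
        unfold mpoly
        rw [Fin.sum_univ_succ, mul_add, Finset.mul_sum]
        simp [pow_succ', mul_left_comm]
      change _ = if (mpoly (j + 1) (Fin.cons (0 : Fq) b : Fin (j + 1) → Fq)).coeff 0 = 0 then
        g (mpoly (j + 1) (Fin.cons (0 : Fq) b : Fin (j + 1) → Fq)) else 0
      rw [h2, if_pos (by simp), hg _ (mpoly_monic j b)]
    · intro x _ hx
      refine Finset.sum_eq_zero fun b _ => ?_
      rw [if_neg]
      rw [mpoly_coeff, dif_pos (by omega)]
      exact hx
    · simp
  rw [h1, ← Finset.sum_sub_distrib]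
  refine Finset.sum_congr rfl fun b _ => ?_
  by_cases h : (mpoly (j + 1) b).coeff 0 = 0 <;> simp [h]

/-- Sum of the character over monic polynomials of degree `j`. -/
def SS (e : AddChar Fq ℂ) {n : ℕ} (c : Fin n → Fq) (j : ℕ) : ℂ :=
  ∑ b : Fin j → Fq, XX e c ((mpoly j b).reverse : Fq[X])

lemma reverse_mpoly (j : ℕ) (b : Fin j → Fq) :
    (((mpoly j (fun i => b (Fin.rev i))).reverse : Fq[X]) : PowerSeries Fq) =
      ps (Fin.cons 1 b : Fin (j + 1) → Fq) := by
  ext i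
  rw [Polynomial.coeff_coe, coeff_reverse, mpoly_natDegree, mpoly_coeff]
  by_cases hi : i ≤ j
  · rw [revAt_le hi]
    cases i with
    | zero => simp [ps]
    | succ i =>
      rw [dif_pos (by omega)]
      have : Fin.rev (⟨j - (i + 1), by omega⟩ : Fin j) = ⟨i, by omega⟩ := by
        ext; simp [Fin.val_rev]; omega
      rw [this]
      have h2 := coeff_ps (Fin.cons 1 b : Fin (j + 1) → Fq) (Fin.succ ⟨i, by omega⟩)
      rw [Fin.cons_succ] at h2
      simpa using h2.symm
  · rw [revAt_eq_self_of_lt (by omega), dif_neg (by omega), if_neg (by omega),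
      coeff_ps_ge _ _ (by omega)]

lemma SS_eq (e : AddChar Fq ℂ) {n : ℕ} (c : Fin n → Fq) (j : ℕ) :
    SS e c j = ∑ b : Fin j → Fq, XX e c (ps (Fin.cons 1 b : Fin (j + 1) → Fq)) := by
  unfold SS
  have hinv : Function.Involutive (fun (b : Fin j → Fq) (i : Fin j) => b (Fin.rev i)) := by
    intro b; funext i; simp
  rw [← hinv.bijective.sum_comp]
  simp_rw [reverse_mpoly]

lemma US_SS (e : AddChar Fq ℂ) {n : ℕ} (c : Fin n → Fq) (j : ℕ) :
    US e c (j + 1) = ((Fintype.card Fq : ℂ) - 1) * SS e c j := by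
  unfold US
  rw [← (Fin.consEquiv (fun _ : Fin (j + 1) => Fq)).sum_comp, Fintype.sum_prod_type]
  have key : ∀ x : Fq, ∑ b : Fin j → Fq, XX e c (ps (Fin.cons x b : Fin (j + 1) → Fq)) =
      if x = 0 then 0 else SS e c j := by
    intro x
    split_ifs with hx
    · refine Finset.sum_eq_zero fun b _ => ?_
      unfold XX
      rw [if_neg]
      rw [not_not, ← PowerSeries.coeff_zero_eq_constantCoeff_apply]
      simpa [hx] using coeff_ps (Fin.cons x b : Fin (j + 1) → Fq) 0
    · rw [SS_eq]
      have hb : Function.Bijective (fun (b : Fin j → Fq) (i : Fin j) => x * b i) := by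
        apply Finite.injective_iff_bijective.1
        intro b b' h
        funext i
        exact mul_left_cancel₀ hx (congrFun h i)
      rw [← hb.sum_comp]
      refine Finset.sum_congr rfl fun b _ => ?_
      have : ps (Fin.cons x (fun i => x * b i) : Fin (j + 1) → Fq) =
          PowerSeries.C x * ps (Fin.cons 1 b : Fin (j + 1) → Fq) := by
        ext i
        rw [PowerSeries.coeff_C_mul]
        by_cases hi : i < j + 1
        · cases i with
          | zero => simp [ps]
          | succ i =>
            have e1 := coeff_ps (Fin.cons x (fun i => x * b i) : Fin (j + 1) → Fq)
              (Fin.succ ⟨i, by omega⟩)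
            have e2 := coeff_ps (Fin.cons 1 b : Fin (j + 1) → Fq) (Fin.succ ⟨i, by omega⟩)
            rw [Fin.cons_succ] at e1 e2
            simp only [Fin.succ_mk] at e1 e2
            rw [e1, e2]
        · rw [coeff_ps_ge _ _ (by omega), coeff_ps_ge _ _ (by omega), mul_zero]
      rw [this, XX_mul, XX_C e c x hx, one_mul]
  refine (Finset.sum_congr rfl fun x _ => key x).trans ?_
  rw [← Finset.sum_erase_add _ _ (Finset.mem_univ (0 : Fq))]
  rw [if_pos rfl, add_zero, Finset.sum_congr rfl (g := fun _ => SS e c j), Finset.sum_const,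
    Finset.card_erase_of_mem (Finset.mem_univ _), Finset.card_univ, nsmul_eq_mul,
    Nat.cast_sub Fintype.card_pos, Nat.cast_one]
  intro x hx
  rw [if_neg (Finset.ne_of_mem_erase hx)]

lemma XX_rev_mul (e : AddChar Fq ℂ) {n : ℕ} (c : Fin n → Fq) (F G : Fq[X]) :
    XX e c ((F * G).reverse : Fq[X]) = XX e c (F.reverse : Fq[X]) * XX e c (G.reverse : Fq[X]) := by
  rw [reverse_mul_of_domain, Polynomial.coe_mul, XX_mul]

lemma XX_rev_X_mul (e : AddChar Fq ℂ) {n : ℕ} (c : Fin n → Fq) (F : Fq[X]) :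
    XX e c ((X * F).reverse : Fq[X]) = XX e c (F.reverse : Fq[X]) := by
  rw [reverse_X_mul]

lemma psif_eq (p : ℕ) [Algebra (ZMod p) Fq] (ψ : AddChar (ZMod p) ℂ) (d : ℕ)
    (a : Fin (d + 1) → Fq) (ha0 : a 0 = 0) (F : Fq[X]) (hF : F.Monic) :
    psif p ψ (cpoly a) F =
      XX (ψ.compAddMonoidHom (Algebra.trace (ZMod p) Fq).toAddMonoidHom)
        (fun k : Fin d => a k.succ) (F.reverse : Fq[X]) := by
  have hcc : PowerSeries.constantCoeff ((F.reverse : Fq[X]) : PowerSeries Fq) = 1 := by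
    rw [← PowerSeries.coeff_zero_eq_constantCoeff_apply, Polynomial.coeff_coe, coeff_zero_reverse]
    exact hF
  have hl : ld ((F.reverse : Fq[X]) : PowerSeries Fq) =
      PowerSeries.mk (fun k => Algebra.trace Fq (AdjoinRoot F) (AdjoinRoot.root F ^ (k + 1))) := by
    unfold ld
    rw [trace_series hF, neg_mul, neg_mul, neg_mul, neg_neg, mul_right_comm, PowerSeries.mul_inv_cancel, one_mul]
    rw [hcc]; exact one_ne_zero
  unfold psif XX
  rw [if_pos (by rw [hcc]; exact one_ne_zero), hl]
  rw [AddChar.compAddMonoidHom_apply]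
  congr 1
  change Algebra.trace (ZMod p) Fq _ = Algebra.trace (ZMod p) Fq _
  congr 1
  unfold cpoly
  rw [Fin.sum_univ_succ, ha0]
  simp only [map_zero, zero_mul, zero_add, map_sum, map_mul, aeval_C, map_pow, aeval_X,
    PowerSeries.coeff_mk, Fin.val_succ]
  refine Finset.sum_congr rfl fun k _ => ?_
  rw [← Algebra.smul_def, map_smul, smul_eq_mul]

end MonicPart
section AlgebraPart

lemma alg_sums (b A : ℕ → ℂ) (hb0 : b 0 = 0) (hb1 : b 1 = 0)
    (hA : ∀ n, A n = b (n + 2) - 2 * b (n + 1) + b n) (v : ℂ) (N : ℕ) :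
    (∑ j ∈ Finset.range N, A j * v ^ j = (1 - v) ^ 2 * ∑ j ∈ Finset.range N, b (j + 2) * v ^ j
      + (2 * b (N + 1) - b N) * v ^ N - b (N + 1) * v ^ (N + 1)) ∧
    (∑ j ∈ Finset.range N, A j = b (N + 1) - b N) ∧
    (∑ j ∈ Finset.range N, ((N : ℂ) - j) * A j = b (N + 1)) := by
  induction N with
  | zero => simp [hb0, hb1]
  | succ N ih =>
    obtain ⟨h1, h2, h3⟩ := ih
    have h2' : ∑ j ∈ Finset.range (N + 1), A j = b (N + 2) - b (N + 1) := by
      rw [Finset.sum_range_succ, h2, hA]; ring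
    refine ⟨?_, h2', ?_⟩
    · rw [Finset.sum_range_succ, Finset.sum_range_succ, h1, hA]
      ring
    · have : ∑ j ∈ Finset.range (N + 1), (((N + 1 : ℕ) : ℂ) - j) * A j =
          ∑ j ∈ Finset.range (N + 1), ((N : ℂ) - j) * A j + ∑ j ∈ Finset.range (N + 1), A j := by
        rw [← Finset.sum_add_distrib]
        refine Finset.sum_congr rfl fun j _ => ?_
        push_cast; ring
      rw [this, h2', Finset.sum_range_succ, h3]
      ring

lemma sym_sq (w : ℕ → ℂ) (N : ℕ)
    (hw : ∀ i j, i ≤ N → j ≤ N → w (N - i) * w (N - j) = w i * w j) :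
    (∑ i ∈ Finset.range (N + 1), w i) ^ 2 =
      2 * ∑ n ∈ Finset.range N, ∑ x ∈ Finset.HasAntidiagonal.antidiagonal n, w x.1 * w x.2
        + ∑ x ∈ Finset.HasAntidiagonal.antidiagonal N, w x.1 * w x.2 := by
  let Q := Finset.range (N + 1) ×ˢ Finset.range (N + 1)
  let f : ℕ × ℕ → ℂ := fun x => w x.1 * w x.2
  have h0 : (∑ i ∈ Finset.range (N + 1), w i) ^ 2 = ∑ x ∈ Q, f x := by
    rw [pow_two, Finset.sum_mul_sum, Finset.sum_product]
  have hQ : ∀ x : ℕ × ℕ, x ∈ Q ↔ x.1 ≤ N ∧ x.2 ≤ N := by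
    intro x; simp [Q, Nat.lt_succ_iff]
  have hlt : ∑ x ∈ Q with x.1 + x.2 < N, f x =
      ∑ n ∈ Finset.range N, ∑ x ∈ Finset.HasAntidiagonal.antidiagonal n, f x := by
    rw [← Finset.sum_fiberwise_of_maps_to (s := Q.filter fun x => x.1 + x.2 < N)
      (t := Finset.range N) (g := fun x => x.1 + x.2)]
    · refine Finset.sum_congr rfl fun n hn => Finset.sum_congr ?_ fun _ _ => rfl
      ext x
      rw [Finset.mem_range] at hn
      simp only [Finset.mem_filter, hQ, Finset.HasAntidiagonal.mem_antidiagonal]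
      omega
    · intro x hx
      simpa using (Finset.mem_filter.1 hx).2
  have hgt : ∑ x ∈ Q with N < x.1 + x.2, f x = ∑ x ∈ Q with x.1 + x.2 < N, f x := by
    refine Finset.sum_bij' (fun x _ => (N - x.1, N - x.2)) (fun x _ => (N - x.1, N - x.2))
      ?_ ?_ ?_ ?_ ?_
    · intro x hx
      simp only [Finset.mem_filter, hQ] at hx ⊢
      omega
    · intro x hx
      simp only [Finset.mem_filter, hQ] at hx ⊢
      omega
    · intro x hx
      simp only [Finset.mem_filter, hQ] at hx
      ext <;> simp only <;> omega
    · intro x hx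
      simp only [Finset.mem_filter, hQ] at hx
      ext <;> simp only <;> omega
    · intro x hx
      simp only [Finset.mem_filter, hQ] at hx
      exact (hw x.1 x.2 hx.1.1 hx.1.2).symm
  have heq : ∑ x ∈ Q with x.1 + x.2 = N, f x =
      ∑ x ∈ Finset.HasAntidiagonal.antidiagonal N, f x := by
    refine Finset.sum_congr ?_ fun _ _ => rfl
    ext x
    simp only [Finset.mem_filter, hQ, Finset.HasAntidiagonal.mem_antidiagonal]
    omega
  have hsplit : ∑ x ∈ Q, f x = ∑ x ∈ Q with x.1 + x.2 < N, f x +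
      ∑ x ∈ Q with N < x.1 + x.2, f x + ∑ x ∈ Q with x.1 + x.2 = N, f x := by
    rw [Finset.sum_filter, Finset.sum_filter, Finset.sum_filter, ← Finset.sum_add_distrib,
      ← Finset.sum_add_distrib]
    refine Finset.sum_congr rfl fun x _ => ?_
    rcases lt_trichotomy (x.1 + x.2) N with h | h | h
    · simp [h, h.ne, h.not_gt]
    · simp [h]
    · simp [h, h.ne', h.not_gt]
  rw [h0, hsplit, hgt, hlt, heq]
  ring

lemma final_alg (s Cc : ℕ → ℂ) (N : ℕ) (Q v : ℂ) (hv : v ≠ 0) (hQ : Q * v ^ 2 = 1)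
    (hs0 : s 0 = 1) (htop : s (N + 1) = 0)
    (hs : ∀ j ≤ N, s N * s (N - j) = Q ^ (N - j) * s j)
    (hC0 : Cc 0 = s 0) (hC : ∀ i, Cc (i + 1) = s (i + 1) - s i) (A : ℕ → ℂ)
    (hA : ∀ n, A n = ∑ x ∈ Finset.HasAntidiagonal.antidiagonal n, Cc x.1 * Cc x.2) :
    (∑ j ∈ Finset.range (N + 2), Cc j * v ^ j) ^ 2 =
      2 * ∑ j ∈ Finset.range N, A j * v ^ j + (1 - v) ^ 2 * (A N * v ^ N) +
      v ^ (N + 1) * ∑ j ∈ Finset.range N, (((N : ℂ) + 1 - j) * (v - v⁻¹) - 2) * A j := by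
  have ha : ∀ M, ∑ j ∈ Finset.range (M + 1), Cc j * v ^ j =
      (1 - v) * ∑ j ∈ Finset.range M, s j * v ^ j + s M * v ^ M := by
    intro M
    induction M with
    | zero => simp [hC0]
    | succ M ih =>
      rw [Finset.sum_range_succ, ih, Finset.sum_range_succ _ M, hC]
      ring
  rw [ha (N + 1), htop, zero_mul, add_zero, mul_pow]
  let B : ℕ → ℂ := fun n => ∑ x ∈ Finset.HasAntidiagonal.antidiagonal n, s x.1 * s x.2
  let b : ℕ → ℂ := fun n => match n with
    | 0 => 0
    | 1 => 0
    | n + 2 => B n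
  have hps : PowerSeries.mk A = (1 - PowerSeries.X) ^ 2 * PowerSeries.mk B := by
    have h1 : PowerSeries.mk A = PowerSeries.mk Cc * PowerSeries.mk Cc := by
      ext n; simp [PowerSeries.coeff_mul, hA]
    have h2 : PowerSeries.mk B = PowerSeries.mk s * PowerSeries.mk s := by
      ext n; simp [PowerSeries.coeff_mul, B]
    have h3 : PowerSeries.mk Cc = (1 - PowerSeries.X) * PowerSeries.mk s := by
      ext n
      rw [sub_mul, one_mul, map_sub]
      cases n with
      | zero => simp [hC0]
      | succ n => simp [hC, PowerSeries.coeff_succ_X_mul]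
    rw [h1, h2, h3]; ring
  have hAb : ∀ n, A n = b (n + 2) - 2 * b (n + 1) + b n := by
    intro n
    have h1 : A n = PowerSeries.coeff n (PowerSeries.mk B - PowerSeries.X * (PowerSeries.mk B +
        PowerSeries.mk B) + PowerSeries.X * (PowerSeries.X * PowerSeries.mk B)) := by
      rw [← PowerSeries.coeff_mk n A, hps]
      congr 1; ring
    rw [h1]
    match n with
    | 0 => simp [b]
    | 1 =>
      have hX : ∀ φ : PowerSeries ℂ, PowerSeries.coeff 1 (PowerSeries.X * φ) =
        PowerSeries.coeff 0 φ := fun φ => PowerSeries.coeff_succ_X_mul 0 φ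
      rw [map_add, map_sub, hX, hX]
      simp [b]
      ring
    | n + 2 =>
      rw [map_add, map_sub, PowerSeries.coeff_succ_X_mul,
        PowerSeries.coeff_succ_X_mul, PowerSeries.coeff_succ_X_mul]
      simp [b]
      ring
  obtain ⟨e1, e2, e3⟩ := alg_sums b A rfl rfl hAb v N
  have hwN : ∀ i ≤ N, (s N * v ^ N) * (s (N - i) * v ^ (N - i)) = s i * v ^ i := by
    intro i hi
    have h1 : Q ^ (N - i) * v ^ (N - i) * v ^ (N - i) = 1 := by
      rw [mul_assoc, ← mul_pow, ← mul_pow, ← pow_two, hQ, one_pow]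
    have h2 : v ^ N = v ^ (N - i) * v ^ i := by rw [← pow_add]; congr 1; omega
    rw [h2]
    linear_combination (v ^ (N - i) * v ^ i * v ^ (N - i)) * hs i hi + (s i * v ^ i) * h1
  have hsym := sym_sq (fun i => s i * v ^ i) N (by
    intro i j hi hj
    have h0 := hwN 0 (Nat.zero_le _)
    have hi' := hwN i hi
    have hj' := hwN j hj
    simp only [Nat.sub_zero, hs0, pow_zero, mul_one] at h0
    rw [← hi', ← hj']
    linear_combination (-(s (N - i) * v ^ (N - i) * (s (N - j) * v ^ (N - j)))) * h0)
  have hanti : ∀ n, ∑ x ∈ Finset.HasAntidiagonal.antidiagonal n,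
      s x.1 * v ^ x.1 * (s x.2 * v ^ x.2) = b (n + 2) * v ^ n := by
    intro n
    simp only [b, B]
    rw [Finset.sum_mul]
    refine Finset.sum_congr rfl fun x hx => ?_
    rw [← Finset.HasAntidiagonal.mem_antidiagonal.1 hx, pow_add]
    ring
  simp only [hanti] at hsym
  rw [hsym]
  have e4 : ∑ j ∈ Finset.range N, (((N : ℂ) + 1 - j) * (v - v⁻¹) - 2) * A j =
      (v - v⁻¹) * (2 * b (N + 1) - b N) - 2 * (b (N + 1) - b N) := by
    have : ∑ j ∈ Finset.range N, (((N : ℂ) + 1 - j) * (v - v⁻¹) - 2) * A j =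
      (v - v⁻¹) * (∑ j ∈ Finset.range N, ((N : ℂ) - j) * A j + ∑ j ∈ Finset.range N, A j)
        - 2 * ∑ j ∈ Finset.range N, A j := by
      rw [← Finset.sum_add_distrib, Finset.mul_sum, Finset.mul_sum, ← Finset.sum_sub_distrib]
      refine Finset.sum_congr rfl fun j _ => ?_
      ring
    rw [this, e2, e3]
    ring
  rw [e4, e1, hAb N]
  have hvv : v ^ (N + 1) * v⁻¹ = v ^ N := by
    rw [pow_succ, mul_assoc, mul_inv_cancel₀ hv, mul_one]
  linear_combination (2 * b (N + 1) - b N) * hvv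

end AlgebraPart

section FinalPart

theorem cpoly_coeff {m : ℕ} (a : Fin m → Fq) (i : Fin m) : (cpoly a).coeff i = a i := by
  unfold cpoly
  rw [finset_sum_coeff]
  simp only [coeff_C_mul, coeff_X_pow]
  rw [Finset.sum_eq_single i]
  · simp
  · intro j _ hj
    rw [if_neg, mul_zero]
    intro h
    exact hj (Fin.ext h.symm)
  · simp

theorem coeff_comp_neg_X' (f : Fq[X]) (i : ℕ) :
    (f.comp (-X)).coeff i = (-1) ^ i * f.coeff i := by
  induction f using Polynomial.induction_on' with
  | add f g hf hg => simp [add_comp, hf, hg, mul_add]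
  | monomial n r =>
    rw [monomial_comp, neg_pow, ← mul_assoc]
    have : (C r * (-1) ^ n * X ^ n : Fq[X]) = C (r * (-1) ^ n) * X ^ n := by simp
    rw [this, coeff_C_mul, coeff_X_pow, coeff_monomial]
    by_cases h : i = n
    · subst h; simp [mul_comm]
    · simp [h, Ne.symm h]

theorem qp_facts (q : ℕ) (hq : 1 < q) :
    (q : ℂ) * qp q (-(1/2)) ^ 2 = 1 ∧ qp q (-(1/2)) ≠ 0 ∧ qp q (1/2) = (qp q (-(1/2)))⁻¹ ∧
    (∀ j : ℕ, (qp q ((j : ℝ) / 2))⁻¹ = qp q (-(1/2)) ^ j) ∧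
    (∀ j : ℕ, qp q (-(j : ℝ) / 2) = qp q (-(1/2)) ^ j) := by
  have h0 : (0 : ℝ) < q := by exact_mod_cast (by omega : 0 < q)
  have h5 : ∀ j : ℕ, qp q (-(j : ℝ) / 2) = qp q (-(1/2)) ^ j := by
    intro j
    unfold qp
    rw [← Complex.ofReal_pow, ← Real.rpow_natCast, ← Real.rpow_mul h0.le]
    congr 2
    ring
  have hinv : ∀ x : ℝ, qp q (-x) = (qp q x)⁻¹ := by
    intro x
    unfold qp
    rw [Real.rpow_neg h0.le, Complex.ofReal_inv]
  refine ⟨?_, ?_, ?_, ?_, h5⟩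
  · rw [← h5 2]
    have : (-((2 : ℕ) : ℝ) / 2) = -1 := by norm_num
    rw [this, hinv]
    unfold qp
    rw [Real.rpow_one]
    have : (q : ℂ) ≠ 0 := by exact_mod_cast (by omega : q ≠ 0)
    simp [this]
  · unfold qp
    exact_mod_cast (Real.rpow_pos_of_pos h0 _).ne'
  · rw [hinv, inv_inv]
  · intro j
    rw [← h5, ← hinv, neg_div]

theorem main_aux (p : ℕ) [Fact p.Prime] (hodd : Odd p)
    {Fq : Type} [Field Fq] [Fintype Fq] [Algebra (ZMod p) Fq]
    (ψ : AddChar (ZMod p) ℂ) (hψ : ψ ≠ 1)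
    (N : ℕ) (hgcd : Nat.Coprime (N + 1) (2 * p))
    (a : Fin (N + 1 + 1) → Fq) (ha : a ∈ AS0odd p (N + 1) (Fq := Fq)) (v : ℂ) (hv : v ≠ 0)
    (hQ : (Fintype.card Fq : ℂ) * v ^ 2 = 1) (Cc A : ℕ → ℂ)
    (hCc : Cc = fun j => ∑ b : Fin j → Fq, chi0 p ψ (cpoly a) (mpoly j b))
    (hA : A = fun j => ∑ b : Fin j → Fq,
      (dk 2 (mpoly j b) : ℂ) * chi0 p ψ (cpoly a) (mpoly j b)) :
    (∑ j ∈ Finset.range (N + 2), Cc j * v ^ j) ^ 2 =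
      2 * ∑ j ∈ Finset.range N, A j * v ^ j + (1 - v) ^ 2 * (A N * v ^ N) +
      v ^ (N + 1) * ∑ j ∈ Finset.range N, (((N : ℂ) + 1 - j) * (v - v⁻¹) - 2) * A j := by
  haveI : CharP Fq p := charP_of_injective_algebraMap (algebraMap (ZMod p) Fq).injective p
  have hp2 : (2 : Fq) ≠ 0 := by
    intro h
    have h2 : ((2 : ℕ) : Fq) = 0 := by exact_mod_cast h
    rw [CharP.cast_eq_zero_iff Fq p] at h2
    have := (Nat.prime_dvd_prime_iff_eq (Fact.out : p.Prime) Nat.prime_two).1 h2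
    subst this
    exact absurd hodd (by decide)
  set E : AddChar Fq ℂ := ψ.compAddMonoidHom (Algebra.trace (ZMod p) Fq).toAddMonoidHom with hE
  set c : Fin (N + 1) → Fq := fun k => a k.succ with hc
  have hE1 : E ≠ 1 := by
    intro h
    apply hψ
    ext x
    obtain ⟨y, rfl⟩ := Algebra.trace_surjective (ZMod p) Fq x
    have := DFunLike.congr_fun h y
    simpa [hE] using this
  unfold AS0odd AS0 at ha
  rw [Finset.mem_filter, Finset.mem_filter] at ha
  obtain ⟨⟨_, hlast, _⟩, hcomp⟩ := ha
  have heven : ∀ i : Fin (N + 1 + 1), Even (i : ℕ) → a i = 0 := by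
    intro i hi
    have h := congrArg (fun f => f.coeff (i : ℕ)) hcomp
    simp only [coeff_comp_neg_X', coeff_neg, cpoly_coeff, hi.neg_one_pow, one_mul] at h
    have h2 : 2 * a i = 0 := by linear_combination h
    exact (mul_eq_zero.1 h2).resolve_left hp2
  have ha0 : a 0 = 0 := heven 0 (by simp)
  have hclast : c (Fin.last N) ≠ 0 := by simpa [hc] using hlast
  have hcodd : ∀ k : Fin (N + 1), Odd (k : ℕ) → c k = 0 := by
    intro k hk
    apply heven
    rw [Fin.val_succ]
    exact hk.add_one
  have hN : ((N + 1 : ℕ) : Fq) ≠ 0 := by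
    rw [Ne, CharP.cast_eq_zero_iff Fq p]
    intro h
    have h1 := Nat.dvd_gcd h (Dvd.intro_left 2 rfl : p ∣ 2 * p)
    rw [hgcd] at h1
    exact (Fact.out : p.Prime).one_lt.ne' (Nat.dvd_one.1 h1)
  have hq1 : (Fintype.card Fq : ℂ) - 1 ≠ 0 := by
    have := Fintype.one_lt_card (α := Fq)
    rw [sub_ne_zero]
    exact_mod_cast this.ne'
  have hq0 : (Fintype.card Fq : ℂ) ≠ 0 := by
    exact_mod_cast Fintype.card_ne_zero
  have hs0 : SS E c 0 = 1 := by
    unfold SS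
    simp only [mpoly, pow_zero, Finset.univ_eq_empty, Finset.sum_empty, add_zero]
    rw [← C_1, reverse_C]
    simp [XX_one]
  have htop : SS E c (N + 1) = 0 := by
    have := US_top E hE1 c hclast hN
    rw [US_SS] at this
    exact (mul_eq_zero.1 this).resolve_left hq1
  have hreal : ∀ j, conj (SS E c j) = SS E c j := by
    intro j
    have := US_real E c hcodd (j + 1)
    rw [US_SS, map_mul, map_sub, map_natCast, map_one] at this
    exact mul_left_cancel₀ hq1 this
  have hfe : ∀ j ≤ N, SS E c (N - j) * GS E c (N + 2) 1 =
      (Fintype.card Fq : ℂ) ^ (N - j + 1) * SS E c j := by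
    intro j hj
    have := FE E hE1 c hclast hN (j + 1) (N - j + 1) (by omega)
    rw [US_SS, US_SS, map_mul, map_sub, map_natCast, map_one, hreal] at this
    apply mul_left_cancel₀ hq1
    linear_combination this
  have htau : GS E c (N + 2) 1 = (Fintype.card Fq : ℂ) * SS E c N := by
    have := hfe N le_rfl
    simpa [hs0] using this
  have hs : ∀ j ≤ N, SS E c N * SS E c (N - j) = (Fintype.card Fq : ℂ) ^ (N - j) * SS E c j := by
    intro j hj
    have := hfe j hj
    rw [htau] at this
    apply mul_left_cancel₀ hq0
    rw [pow_succ] at this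
    linear_combination this
  have hchi : ∀ F : Fq[X], F.Monic → chi0 p ψ (cpoly a) F =
      if F.coeff 0 ≠ 0 then XX E c (F.reverse : Fq[X]) else 0 := by
    intro F hF
    unfold chi0
    rw [psif_eq p ψ (N + 1) a ha0 F hF]
  have hmul : ∀ F G : Fq[X], F.Monic → G.Monic →
      chi0 p ψ (cpoly a) (F * G) = chi0 p ψ (cpoly a) F * chi0 p ψ (cpoly a) G := by
    intro F G hF hG
    rw [hchi _ hF, hchi _ hG, hchi _ (hF.mul hG), mul_coeff_zero]
    by_cases h1 : F.coeff 0 = 0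
    · simp [h1]
    by_cases h2 : G.coeff 0 = 0
    · simp [h2]
    simp only [ne_eq, mul_eq_zero, h1, h2, or_self, not_false_eq_true, if_true]
    exact XX_rev_mul E c F G
  refine final_alg (SS E c) Cc N (Fintype.card Fq) v hv hQ hs0 htop hs ?_ ?_ A ?_
  · rw [hCc, hs0]
    have h1 := hchi 1 monic_one
    rw [← C_1, reverse_C] at h1
    simp [mpoly] at h1 ⊢
    rw [h1, XX_one]
  · intro i
    rw [hCc]
    simp only [hchi _ (mpoly_monic _ _)]
    rw [sum_psif_split (fun F => XX E c (F.reverse : Fq[X])) (fun F hF => XX_rev_X_mul E c F)]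
    rfl
  · intro n
    rw [hA, hCc]
    exact conv_sum (chi0 p ψ (cpoly a)) hmul n

end FinalPart

/-- (Approximate functional equation for the odd family; Lemma `afeodd`.)
For `d ≥ 1` with `gcd(d,2p) = 1` and `f ∈ AS_d^{0,odd}`,
`L(1/√q,χ_f)² = 2 ∑_{deg F ≤ d−2} d₂(F)χ_f(F)/q^{deg F/2}
  + (1−q^{−1/2})² ∑_{deg F = d−1} d₂(F)χ_f(F)/q^{deg F/2}
  + q^{−d/2} ∑_{j=0}^{d−2} ((d−j)(q^{−1/2}−q^{1/2}) − 2) ∑_{deg F = j} d₂(F)χ_f(F)`. -/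
theorem stmt_15 (p : ℕ) [Fact p.Prime] (hodd : Odd p)
    {Fq : Type} [Field Fq] [Fintype Fq] [Algebra (ZMod p) Fq]
    (q e : ℕ) (he : e ≠ 0) (hq : q = p ^ e) (hcard : Fintype.card Fq = q)
    (ψ : AddChar (ZMod p) ℂ) (hψ : ψ ≠ 1)
    (d : ℕ) (hd : 1 ≤ d) (hgcd : Nat.Coprime d (2 * p))
    (a : Fin (d + 1) → Fq) (ha : a ∈ AS0odd p d (Fq := Fq)) :
    (Lchi0 p ψ d (cpoly a) (qp q (-(1/2)))) ^ 2
      = 2 * (∑ j ∈ Finset.range (d - 1),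
            ∑ b : Fin j → Fq,
              (dk 2 (mpoly j b) : ℂ) * chi0 p ψ (cpoly a) (mpoly j b) /
                qp q ((j : ℝ) / 2))
        + (1 - qp q (-(1/2))) ^ 2 *
            (∑ b : Fin (d - 1) → Fq,
              (dk 2 (mpoly (d - 1) b) : ℂ) * chi0 p ψ (cpoly a) (mpoly (d - 1) b) /
                qp q (((d : ℝ) - 1) / 2))
        + qp q (-(d : ℝ) / 2) *
            (∑ j ∈ Finset.range (d - 1),
              (((d : ℂ) - (j : ℂ)) * (qp q (-(1/2)) - qp q (1/2)) - 2) *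
                ∑ b : Fin j → Fq,
                  (dk 2 (mpoly j b) : ℂ) * chi0 p ψ (cpoly a) (mpoly j b)) := by
  obtain ⟨N, rfl⟩ : ∃ N, d = N + 1 := ⟨d - 1, by omega⟩
  have hq1 : 1 < q := hcard ▸ Fintype.one_lt_card
  obtain ⟨f1, f2, f3, f4, f5⟩ := qp_facts q hq1
  have key := main_aux p hodd ψ hψ N hgcd a ha (qp q (-(1/2))) f2 (by rw [hcard]; exact f1) _ _
    rfl rfl
  have hd1 : (((N + 1 : ℕ) : ℝ) - 1) / 2 = (N : ℝ) / 2 := by push_cast; ring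
  unfold Lchi0
  rw [key]
  rw [hd1, f5, f3]
  simp only [div_eq_mul_inv _ (qp q _), f4, Nat.add_sub_cancel, Finset.sum_mul, Nat.cast_add,
    Nat.cast_one]
  rfl

end AS
end
end

section
/- Let p be an odd prime, q a power of p, and n ≥ 1 an integer with p ∤ n. Then the number of units g of the ring 𝔽_q[x]/(x^n) satisfying g^p = 1 equals q^{n − 1 − ⌊n/p⌋}. Equivalently, the p-torsion subgroup of (𝔽_q[x]/(x^n))^× has order q^{n − 1 − ⌊n/p⌋}. -/
open Polynomial

theorem stmt16_dvd_iff {F : Type} [Field F] (p n : ℕ) (hp : 0 < p) (hpn : ¬ p ∣ n) (f : F[X]) :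
    (X : F[X]) ^ n ∣ f ^ p ↔ (X : F[X]) ^ (n / p + 1) ∣ f := by
  constructor
  · intro h
    by_cases hf : f = 0
    · simp [hf]
    have hfin : FiniteMultiplicity (X : F[X]) f :=
      FiniteMultiplicity.of_prime_left prime_X hf
    obtain ⟨u, hu, hXu⟩ := hfin.exists_eq_pow_mul_and_not_dvd
    set k := multiplicity (X : F[X]) f
    rw [hu, mul_pow, ← pow_mul] at h
    have hle : n ≤ k * p := by
      by_contra hlt
      push Not at hlt
      obtain ⟨d, rfl⟩ := Nat.exists_eq_add_of_lt hlt
      rw [add_assoc, pow_add] at h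
      have h2 := (mul_dvd_mul_iff_left (pow_ne_zero _ (X_ne_zero (R := F)))).1 h
      exact hXu (prime_X.dvd_of_dvd_pow ((dvd_pow_self X (Nat.succ_ne_zero d)).trans h2))
    have hlt : n < k * p := lt_of_le_of_ne hle (fun h => hpn ⟨k, by rw [h, mul_comm]⟩)
    have : n / p < k := (Nat.div_lt_iff_lt_mul hp).2 hlt
    rw [hu]
    exact (pow_dvd_pow X this).trans (dvd_mul_right _ _)
  · intro h
    have h1 := pow_dvd_pow_of_dvd h p
    rw [← pow_mul] at h1
    refine (pow_dvd_pow X ?_).trans h1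
    exact (Nat.lt_mul_of_div_lt (Nat.lt_succ_self _) hp).le.trans (by rw [])

theorem stmt16_units {R : Type} [CommRing R] (p : ℕ) [Fact p.Prime] [CharP R p] :
    Nat.card {g : Rˣ // g ^ p = 1} = Nat.card {h : R // h ^ p = 0} := by
  have hp : p ≠ 0 := (Fact.out : p.Prime).ne_zero
  refine Nat.card_congr (Equiv.ofBijective
    (fun g => ⟨(g.1 : R) - 1, ?_⟩) ⟨?_, ?_⟩)
  · have := congrArg (Units.val) g.2
    rw [sub_pow_char, one_pow, ← Units.val_pow_eq_pow_val, this]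
    simp
  · intro a b h
    have h1 := congrArg Subtype.val h
    exact Subtype.ext (Units.ext (sub_left_injective h1))
  · rintro ⟨h, hh⟩
    have h1 : (h + 1) ^ p = 1 := by rw [add_pow_char, hh]; simp
    refine ⟨⟨Units.ofPowEqOne (h + 1) p h1 hp, ?_⟩, ?_⟩
    · exact Units.pow_ofPowEqOne h1 hp
    · apply Subtype.ext
      simp

theorem stmt16_card {F : Type} [Field F] [Fintype F] (p n : ℕ) (hp : 1 < p) (hn : 1 ≤ n)
    (hpn : ¬ p ∣ n) :
    Nat.card {h : F[X] ⧸ Ideal.span {(X : F[X]) ^ n} // h ^ p = 0}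
      = Fintype.card F ^ (n - (n / p + 1)) := by
  have hm : n / p + 1 ≤ n := Nat.div_lt_self hn hp
  have key := stmt16_dvd_iff (F := F) p n (by omega) hpn
  generalize n / p + 1 = m at *
  have h0 : Nat.card (degreeLT F (n - m)) = Fintype.card F ^ (n - m) := by
    rw [Nat.card_congr (degreeLTEquiv F (n - m)).toEquiv]
    simp
  have hXn : (X : F[X]) ^ n = X ^ m * X ^ (n - m) := by
    rw [← pow_add, Nat.add_sub_cancel' hm]
  rw [← h0]
  symm
  refine Nat.card_congr (Equiv.ofBijective
    (fun c => ⟨Ideal.Quotient.mk _ (X ^ m * c.1), ?_⟩) ⟨?_, ?_⟩)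
  · rw [← map_pow, Ideal.Quotient.eq_zero_iff_mem, Ideal.mem_span_singleton, key]
    exact dvd_mul_right _ _
  · intro a b h
    have h1 := congrArg Subtype.val h
    simp only at h1
    rw [Ideal.Quotient.eq, Ideal.mem_span_singleton, ← mul_sub, hXn,
      mul_dvd_mul_iff_left (pow_ne_zero _ X_ne_zero)] at h1
    have hd : (a.1 - b.1).degree < ((n - m : ℕ) : WithBot ℕ) :=
      mem_degreeLT.1 (Submodule.sub_mem _ a.2 b.2)
    apply Subtype.ext
    apply sub_eq_zero.1
    exact eq_zero_of_dvd_of_degree_lt h1 (by rwa [degree_X_pow])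
  · rintro ⟨h, hh⟩
    obtain ⟨f, rfl⟩ := Ideal.Quotient.mk_surjective h
    have hh' := hh
    rw [← map_pow, Ideal.Quotient.eq_zero_iff_mem, Ideal.mem_span_singleton, key] at hh'
    obtain ⟨c, rfl⟩ := hh'
    refine ⟨⟨c %ₘ X ^ (n - m), ?_⟩, ?_⟩
    · rw [mem_degreeLT]
      have := degree_modByMonic_lt c (monic_X_pow (R := F) (n - m))
      rwa [degree_X_pow] at this
    · apply Subtype.ext
      simp only
      rw [Ideal.Quotient.eq, Ideal.mem_span_singleton, ← mul_sub, hXn]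
      apply mul_dvd_mul_left
      rw [dvd_sub_comm]
      exact ⟨c /ₘ X ^ (n - m), by
        rw [sub_eq_iff_eq_add, add_comm]; exact (modByMonic_add_div c _).symm⟩

/-- Let `p` be an odd prime, `q = p^e`, `𝔽_q` a field with `q` elements,
and `n ≥ 1` with `p ∤ n`.  The number of units `g` of `𝔽_q[x]/(x^n)` with `g^p = 1`
(equivalently, the order of the `p`-torsion subgroup of `(𝔽_q[x]/(x^n))ˣ`) equals
`q^{n − 1 − ⌊n/p⌋}`. -/
theorem stmt_16 (p : ℕ) [Fact p.Prime] (hodd : Odd p)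
    (Fq : Type) [Field Fq] [Fintype Fq]
    (q e : ℕ) (he : e ≠ 0) (hq : q = p ^ e) (hcard : Fintype.card Fq = q)
    (n : ℕ) (hn : 1 ≤ n) (hpn : ¬ p ∣ n) :
    Nat.card {g : (Fq[X] ⧸ Ideal.span {(X : Fq[X]) ^ n})ˣ // g ^ p = 1}
      = q ^ (n - 1 - n / p) := by
  have hp : p.Prime := Fact.out
  have : CharP Fq p := by
    obtain ⟨r, hr⟩ := CharP.exists Fq
    obtain ⟨k, hr', hk⟩ := FiniteField.card Fq r
    have : p = r := by
      have h1 : p ∣ r ^ (k : ℕ) := by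
        rw [← hk, hcard, hq]
        exact dvd_pow_self p he
      exact (Nat.prime_dvd_prime_iff_eq hp hr').1 (hp.dvd_of_dvd_pow h1)
    exact this ▸ hr
  have : Nontrivial (Fq[X] ⧸ Ideal.span {(X : Fq[X]) ^ n}) := by
    rw [Ideal.Quotient.nontrivial_iff, Ne, Ideal.span_singleton_eq_top, isUnit_pow_iff (by omega)]
    exact not_isUnit_X
  have : CharP (Fq[X] ⧸ Ideal.span {(X : Fq[X]) ^ n}) p :=
    charP_of_injective_algebraMap (algebraMap Fq _).injective p
  rw [stmt16_units p, stmt16_card p n hp.one_lt hn hpn, hcard]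
  congr 1
  omega
end
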